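/- For t > 0 let P_t(1/2+iτ) = ∑_{p ≤ t, p prime} p^{-(1/2+iτ)}. Then for every real x, lim_{t→∞} lim_{T→∞} (1/T) · Leb{ τ ∈ [T,2T] : Im P_t(1/2+iτ) ≤ x · √( (1/2) log log t ) } = Φ(x), where Φ(x) = (1/√(2π)) ∫_{-∞}^x e^{-u²/2} du is the standard normal distribution function; that is, Im P_t(1/2+iτ) / √((1/2) log log t) converges in distribution to a standard normal random variable. -/

import Mathlib

open MeasureTheory Filter Real

/-- The set of primes `p ≤ t`. -/
noncomputable def primesUpTo (t : ℝ) : Finset ℕ :=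
  (Finset.range (⌊t⌋₊ + 1)).filter Nat.Prime

/-- The truncated prime zeta function `P_t(1/2 + iτ) = ∑_{p ≤ t} p^{-(1/2+iτ)}`. -/
noncomputable def primeZetaTrunc (t : ℝ) (τ : ℝ) : ℂ :=
  ∑ p ∈ primesUpTo t, (p : ℂ) ^ (-(1 / 2 + Complex.I * (τ : ℂ)))

/-- The standard normal distribution function `Φ(x)`. -/
noncomputable def stdNormalCDF (x : ℝ) : ℝ :=
  (1 / Real.sqrt (2 * π)) * ∫ u in Set.Iic x, Real.exp (-u ^ 2 / 2)


noncomputable def prA (k : ℕ) : ℝ := if k.Prime then Real.log k / k else 0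

lemma mertens_upper (n : ℕ) (hn : 1 ≤ n) :
    ∑ k ∈ Finset.range (n+1), prA k ≤ Real.log n + Real.log 4 := by
  have hn0 : (0:ℝ) < n := by exact_mod_cast hn
  have h1 : (Real.log (n.factorial : ℝ)) =
      ∑ p ∈ (Finset.range (n+1)).filter Nat.Prime, (n.factorial.factorization p : ℝ) * Real.log p := by
    have h := Nat.prod_factorization_pow_eq_self (Nat.factorial_ne_zero n)
    conv_lhs => rw [← h]
    rw [Finsupp.prod_of_support_subset (s := (Finset.range (n+1)).filter Nat.Prime)]
    · push_cast
      rw [Real.log_prod]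
      · simp
      · intro p hp
        simp at hp
        have := hp.2.pos
        positivity
    · intro p hp
      simp only [Nat.support_factorization, Nat.mem_primeFactors] at hp
      simp only [Finset.mem_filter, Finset.mem_range]
      exact ⟨Nat.lt_succ_of_le ((hp.1.dvd_factorial).1 hp.2.1), hp.1⟩
    · simp
  have h2 : Real.log (n.factorial : ℝ) ≤ n * Real.log n := by
    have : (n.factorial : ℝ) ≤ (n:ℝ)^n := by exact_mod_cast Nat.factorial_le_pow n
    calc _ ≤ Real.log ((n:ℝ)^n) := Real.log_le_log (by positivity) this
      _ = _ := by simp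
  have h3 : Chebyshev.theta n ≤ Real.log 4 * n := Chebyshev.theta_le_log4_mul_x hn0.le
  have h4 : Chebyshev.theta n = ∑ p ∈ (Finset.range (n+1)).filter Nat.Prime, Real.log p := by
    rw [Chebyshev.theta_eq_sum_Icc]
    simp
    congr 1
    ext p; simp [Nat.lt_succ_iff]
  have h5 : (n:ℝ) * ∑ k ∈ Finset.range (n+1), prA k ≤ Real.log (n.factorial : ℝ) + Chebyshev.theta n := by
    rw [h1, h4, ← Finset.sum_add_distrib]
    unfold prA
    rw [← Finset.sum_filter, Finset.mul_sum]
    apply Finset.sum_le_sum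
    intro p hp
    simp only [Finset.mem_filter, Finset.mem_range] at hp
    have hp0 : (0:ℝ) < p := by exact_mod_cast hp.2.pos
    have hlog : 0 ≤ Real.log p := Real.log_natCast_nonneg p
    have hv : n / p ≤ n.factorial.factorization p := by
      rw [Nat.factorization_factorial hp.2 (b := Nat.log p n + 2) (by omega)]
      have : n / p = n / p ^ 1 := by simp
      rw [this]
      exact Finset.single_le_sum (f := fun i => n / p ^ i) (fun _ _ => Nat.zero_le _) (by simp)
    have hv2 : (n:ℝ)/p ≤ (n.factorial.factorization p : ℝ) + 1 := by
      have a := (Nat.lt_floor_add_one ((n:ℝ)/p)).le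
      rw [Nat.floor_div_eq_div] at a
      have : ((n/p : ℕ):ℝ) ≤ n.factorial.factorization p := by exact_mod_cast hv
      linarith
    calc (n:ℝ) * (Real.log p / p) = (n/p) * Real.log p := by ring
      _ ≤ ((n.factorial.factorization p : ℝ) + 1) * Real.log p := by gcongr
      _ = _ := by ring
  have h6 : (n:ℝ) * ∑ k ∈ Finset.range (n+1), prA k ≤ n * (Real.log n + Real.log 4) := by linarith
  exact le_of_mul_le_mul_left h6 hn0

lemma summable_logpp : Summable (fun k : ℕ => Real.log k / (k * (k - 1 : ℝ))) := by
  have h := (Real.summable_nat_rpow_inv (p := 3/2)).2 (by norm_num)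
  refine Summable.of_nonneg_of_le (f := fun k : ℕ => 4 * ((k:ℝ) ^ (3/2:ℝ))⁻¹) ?_ ?_ (h.mul_left 4)
  · intro k
    rcases Nat.eq_zero_or_pos k with rfl | hk
    · simp
    · have : (1:ℝ) ≤ k := by exact_mod_cast hk
      have := Real.log_nonneg this
      apply div_nonneg this
      apply mul_nonneg <;> linarith
  · intro k
    rcases Nat.lt_or_ge k 2 with hk | hk
    · interval_cases k <;> simp
    · have hk' : (2:ℝ) ≤ k := by exact_mod_cast hk
      have hl : Real.log k ≤ 2 * (k:ℝ)^(1/2:ℝ) := by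
        have := Real.log_le_rpow_div (x := k) (ε := 1/2) (by linarith) (by norm_num)
        linarith
      have hk2 : (k:ℝ)/2 ≤ k - 1 := by linarith
      have e : (k:ℝ)^(3/2:ℝ) = k * (k:ℝ)^(1/2:ℝ) := by
        rw [show (3/2:ℝ) = 1 + 1/2 by norm_num, Real.rpow_add (by linarith)]; simp
      have e2 : (k:ℝ)^(1/2:ℝ) * (k:ℝ)^(1/2:ℝ) = k := by
        rw [← Real.rpow_add (by linarith)]; norm_num
      have pos : 0 < (k:ℝ)^(1/2:ℝ) := by positivity
      rw [e, div_le_iff₀ (by nlinarith)]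
      set r := (k:ℝ)^(1/2:ℝ)
      have : 4 * ((k:ℝ) * r)⁻¹ * (k * (k-1)) = 4 * (k-1) / r := by field_simp
      rw [this, le_div_iff₀ pos]
      nlinarith

lemma mertens_lower : ∃ C : ℝ, ∀ n : ℕ, 1 ≤ n → 
    Real.log n - C ≤ ∑ k ∈ Finset.range (n+1), prA k := by
  refine ⟨1 + ∑' k : ℕ, Real.log k / (k * (k - 1 : ℝ)), ?_⟩
  intro n hn
  have hn0 : (0:ℝ) < n := by exact_mod_cast hn
  have h1 : (Real.log (n.factorial : ℝ)) =
      ∑ p ∈ (Finset.range (n+1)).filter Nat.Prime, (n.factorial.factorization p : ℝ) * Real.log p := by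
    have h := Nat.prod_factorization_pow_eq_self (Nat.factorial_ne_zero n)
    conv_lhs => rw [← h]
    rw [Finsupp.prod_of_support_subset (s := (Finset.range (n+1)).filter Nat.Prime)]
    · push_cast
      rw [Real.log_prod]
      · simp
      · intro p hp
        simp at hp
        have := hp.2.pos
        positivity
    · intro p hp
      simp only [Nat.support_factorization, Nat.mem_primeFactors] at hp
      simp only [Finset.mem_filter, Finset.mem_range]
      exact ⟨Nat.lt_succ_of_le ((hp.1.dvd_factorial).1 hp.2.1), hp.1⟩
    · simp
  have h2 : n * Real.log n - n ≤ Real.log (n.factorial : ℝ) := by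
    have h := Stirling.le_log_factorial_stirling (n := n) (by omega)
    have : 0 ≤ Real.log n := Real.log_natCast_nonneg n
    have : 0 ≤ Real.log (2 * π) := Real.log_nonneg (by nlinarith [Real.pi_gt_three])
    linarith
  have h5 : Real.log (n.factorial : ℝ) ≤ n * (∑ k ∈ Finset.range (n+1), prA k + ∑ k ∈ Finset.range (n+1), Real.log k / (k * (k - 1 : ℝ))) := by
    rw [h1]
    have : ∑ k ∈ (Finset.range (n+1)).filter Nat.Prime, Real.log k / (k * (k - 1 : ℝ)) ≤ ∑ k ∈ Finset.range (n+1), Real.log k / (k * (k - 1 : ℝ)) := by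
      apply Finset.sum_le_sum_of_subset_of_nonneg (Finset.filter_subset _ _)
      intro k _ _
      rcases Nat.eq_zero_or_pos k with rfl | hk
      · simp
      · have : (1:ℝ) ≤ k := by exact_mod_cast hk
        have := Real.log_nonneg this
        apply div_nonneg this
        apply mul_nonneg <;> linarith
    refine le_trans ?_ (mul_le_mul_of_nonneg_left (add_le_add_right this _) hn0.le)
    unfold prA
    rw [← Finset.sum_filter, ← Finset.sum_add_distrib, Finset.mul_sum]
    apply Finset.sum_le_sum
    intro p hp
    simp only [Finset.mem_filter, Finset.mem_range] at hp
    have hp0 : (2:ℝ) ≤ p := by exact_mod_cast hp.2.two_le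
    have hlog : 0 ≤ Real.log p := Real.log_natCast_nonneg p
    have hv := Nat.factorization_factorial_le_div_pred hp.2 n
    have hv2 : (n.factorial.factorization p : ℝ) ≤ n / (p - 1) := by
      have : ((n / (p-1) : ℕ):ℝ) ≤ (n:ℝ) / ((p-1 : ℕ):ℝ) := Nat.cast_div_le
      rw [Nat.cast_sub hp.2.one_le] at this
      refine le_trans (by exact_mod_cast hv) (this.trans (by simp))
    calc _ ≤ (n:ℝ) / (p - 1) * Real.log p := by gcongr
      _ = _ := by
        have : (p:ℝ) - 1 ≠ 0 := by linarith
        have : (p:ℝ) ≠ 0 := by linarith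
        field_simp
        ring
  have h6 : ∑ k ∈ Finset.range (n+1), Real.log k / (k * (k - 1 : ℝ)) ≤ ∑' k : ℕ, Real.log k / (k * (k - 1 : ℝ)) := by
    apply summable_logpp.sum_le_tsum
    intro k _
    rcases Nat.eq_zero_or_pos k with rfl | hk
    · simp
    · have : (1:ℝ) ≤ k := by exact_mod_cast hk
      have := Real.log_nonneg this
      apply div_nonneg this
      apply mul_nonneg <;> linarith
  have h7 : (n:ℝ) * (Real.log n - (1 + ∑' k : ℕ, Real.log k / (k * (k - 1 : ℝ)))) ≤ n * ∑ k ∈ Finset.range (n+1), prA k := by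
    have := mul_le_mul_of_nonneg_left h6 hn0.le
    linarith
  exact le_of_mul_le_mul_left h7 hn0

lemma loglog_step {a b : ℝ} (ha : 2 ≤ a) (hab : a ≤ b) (hb : b ≤ a + 1) :
    (Real.log b - Real.log a) / Real.log b ≤ Real.log (Real.log b) - Real.log (Real.log a) ∧
    Real.log (Real.log b) - Real.log (Real.log a) ≤ (Real.log b - Real.log a) / Real.log a ∧
    0 ≤ Real.log b - Real.log a ∧ Real.log b - Real.log a ≤ 1 := by
  have hla : 0 < Real.log a := Real.log_pos (by linarith)
  have hle : Real.log a ≤ Real.log b := Real.log_le_log (by linarith) hab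
  have hlb : 0 < Real.log b := by linarith
  have e : Real.log (Real.log b) - Real.log (Real.log a) = Real.log (Real.log b / Real.log a) :=
    (Real.log_div hlb.ne' hla.ne').symm
  refine ⟨?_, ?_, by linarith, ?_⟩
  · rw [e]
    have := Real.one_sub_inv_le_log_of_pos (div_pos hlb hla)
    refine le_trans (le_of_eq ?_) this
    field_simp
  · rw [e]
    have := Real.log_le_sub_one_of_pos (div_pos hlb hla)
    refine le_trans this (le_of_eq ?_)
    field_simp
  · rw [← Real.log_div (by linarith) (by linarith)]
    have := Real.log_le_sub_one_of_pos (x := b / a) (div_pos (by linarith) (by linarith))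
    have : b / a ≤ 2 := by rw [div_le_iff₀ (by linarith)]; linarith
    linarith

noncomputable def prS (n : ℕ) : ℝ := ∑ k ∈ Finset.range (n+1), (if k.Prime then 1 / (k:ℝ) else 0)

lemma mertens_two : ∃ K : ℝ, ∀ n : ℕ, 2 ≤ n → |prS n - Real.log (Real.log n)| ≤ K := by
  obtain ⟨C₀, hC₀⟩ := mertens_lower
  obtain ⟨C, hC⟩ : ∃ C : ℝ, ∀ n : ℕ, 1 ≤ n → |∑ k ∈ Finset.range (n+1), prA k - Real.log n| ≤ C := by
    refine ⟨max C₀ (Real.log 4), fun n hn => ?_⟩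
    rw [abs_le]
    have := hC₀ n hn
    have := mertens_upper n hn
    have := le_max_left C₀ (Real.log 4)
    have := le_max_right C₀ (Real.log 4)
    constructor <;> linarith
  have hC0 : 0 ≤ C := le_trans (abs_nonneg _) (hC 1 le_rfl)
  set D : ℕ → ℝ := fun n => ∑ k ∈ Finset.range (n+1), prA k - Real.log n with hD
  set V : ℕ → ℝ := fun n => prS n - Real.log (Real.log n) - D n / Real.log n with hV
  have key : ∀ n : ℕ, 2 ≤ n → |V n - V 2| ≤ (C + 1) * (1 / Real.log 2 - 1 / Real.log n) := by
    intro n hn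
    induction n, hn using Nat.le_induction with
    | base => simp
    | succ n hn ih =>
      have hn2 : (2:ℝ) ≤ n := by exact_mod_cast hn
      obtain ⟨h1, h2, h3, h4⟩ := loglog_step (a := n) (b := (n+1:ℕ)) hn2 (by push_cast; linarith) (by push_cast; linarith)
      have hl : 0 < Real.log n := Real.log_pos (by linarith)
      have hl' : 0 < Real.log (n+1:ℕ) := by linarith
      set l := Real.log n
      set l' := Real.log (n+1:ℕ)
      have hprS : prS (n+1) = prS n + prA (n+1) / l' := by
        unfold prS
        rw [Finset.sum_range_succ _ (n+1)]
        unfold prA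
        split_ifs with hp
        · have : ((n+1:ℕ):ℝ) ≠ 0 := by positivity
          congr 1
          field_simp
          rfl
        · simp
      have hDs : D (n+1) = D n + prA (n+1) - (l' - l) := by
        simp only [hD]
        rw [Finset.sum_range_succ _ (n+1)]
        ring
      have hi : V (n+1) - V n = -(Real.log l' - Real.log l) + (l' - l) / l' + D n * (1/l - 1/l') := by
        change (prS (n+1) - Real.log l' - D (n+1) / l') - (prS n - Real.log l - D n / l) = _
        rw [hDs, hprS]
        field_simp
        ring
      have hw : 0 ≤ 1/l - 1/l' := by
        have : 1/l' ≤ 1/l := one_div_le_one_div_of_le hl (by linarith)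
        linarith
      have hb1 : |-(Real.log l' - Real.log l) + (l' - l) / l'| ≤ 1/l - 1/l' := by
        have : (l'-l)/l - (l'-l)/l' ≤ 1/l - 1/l' := by
          have : (l'-l)/l - (l'-l)/l' = (l'-l) * (1/l - 1/l') := by ring
          rw [this]
          nlinarith
        rw [abs_le]
        constructor <;> linarith
      have hb2 : |D n * (1/l - 1/l')| ≤ C * (1/l - 1/l') := by
        rw [abs_mul, abs_of_nonneg hw]
        exact mul_le_mul_of_nonneg_right (hC n (by omega)) hw
      have hb : |V (n+1) - V n| ≤ (C+1) * (1/l - 1/l') := by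
        rw [hi]
        refine (abs_add_le _ _).trans ?_
        linarith
      calc |V (n+1) - V 2| ≤ |V (n+1) - V n| + |V n - V 2| := abs_sub_le _ _ _
        _ ≤ _ := by linarith
  refine ⟨|V 2| + (C+1) * (1 / Real.log 2) + C / Real.log 2, fun n hn => ?_⟩
  have hn2 : (2:ℝ) ≤ n := by exact_mod_cast hn
  have hl2 : 0 < Real.log 2 := Real.log_pos (by norm_num)
  have hl : Real.log 2 ≤ Real.log n := Real.log_le_log (by norm_num) hn2
  have hk := key n hn
  have h1 : |D n / Real.log n| ≤ C / Real.log 2 := by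
    rw [abs_div, abs_of_pos (by linarith : 0 < Real.log n)]
    have := hC n (by omega)
    gcongr
  have h2 : prS n - Real.log (Real.log n) = (V n - V 2) + V 2 + D n / Real.log n := by
    simp only [hV]; ring
  rw [h2]
  refine (abs_add_three _ _ _).trans ?_
  have : 0 ≤ (C+1) * (1 / Real.log n) := by
    apply mul_nonneg (by linarith); apply div_nonneg <;> linarith
  linarith

lemma tendsto_loglog : Tendsto (fun t : ℝ => Real.log (Real.log t)) atTop atTop :=
  Real.tendsto_log_atTop.comp Real.tendsto_log_atTop

lemma mertens_tendsto :
    Tendsto (fun t : ℝ => (∑ p ∈ primesUpTo t, 1 / (p:ℝ)) / Real.log (Real.log t)) atTop (nhds 1) := by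
  obtain ⟨K, hK⟩ := mertens_two
  have hsum : ∀ t : ℝ, ∑ p ∈ primesUpTo t, 1 / (p:ℝ) = prS ⌊t⌋₊ := by
    intro t
    unfold primesUpTo prS
    rw [Finset.sum_filter]
  have hb : ∀ t : ℝ, 2 ≤ t → |(∑ p ∈ primesUpTo t, 1 / (p:ℝ)) - Real.log (Real.log t)| ≤ K + 1 / Real.log 2 := by
    intro t ht
    rw [hsum]
    have hn : 2 ≤ ⌊t⌋₊ := Nat.le_floor (by exact_mod_cast ht)
    have hn2 : (2:ℝ) ≤ ⌊t⌋₊ := by exact_mod_cast hn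
    have h1 := hK _ hn
    obtain ⟨h2, h3, h4, h5⟩ := loglog_step (a := ⌊t⌋₊) (b := t) hn2 (Nat.floor_le (by linarith)) (Nat.lt_floor_add_one t).le
    have hl2 : 0 < Real.log 2 := Real.log_pos (by norm_num)
    have hl : Real.log 2 ≤ Real.log ⌊t⌋₊ := Real.log_le_log (by norm_num) hn2
    have h6 : (Real.log t - Real.log ⌊t⌋₊) / Real.log ⌊t⌋₊ ≤ 1 / Real.log 2 := by gcongr
    have h7 : 0 ≤ (Real.log t - Real.log ⌊t⌋₊) / Real.log t := by
      apply div_nonneg h4; linarith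
    rw [abs_le] at h1 ⊢
    constructor <;> linarith [h1.1, h1.2]
  have hz : Tendsto (fun t : ℝ => ((∑ p ∈ primesUpTo t, 1 / (p:ℝ)) - Real.log (Real.log t)) / Real.log (Real.log t)) atTop (nhds 0) := by
    have h0 : Tendsto (fun t : ℝ => (K + 1 / Real.log 2) / Real.log (Real.log t)) atTop (nhds 0) :=
      tendsto_loglog.const_div_atTop _
    refine squeeze_zero_norm' ?_ h0
    filter_upwards [eventually_ge_atTop 2, tendsto_loglog.eventually_gt_atTop 0] with t ht hp
    rw [Real.norm_eq_abs, abs_div, abs_of_pos hp]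
    have := hb t ht
    gcongr
  have := hz.add_const 1
  simp only [zero_add] at this
  refine this.congr' ?_
  filter_upwards [tendsto_loglog.eventually_gt_atTop 0] with t hp
  field_simp
  ring

instance factOne : Fact ((0:ℝ) < 1) := ⟨one_pos⟩

noncomputable abbrev hC : Measure UnitAddCircle := AddCircle.haarAddCircle (T := 1)

noncomputable abbrev hT (s : Finset ℕ) : Measure (UnitAddTorus s) := Measure.pi (fun _ : s => hC)

lemma integral_fourier_haar (n : ℤ) : ∫ θ, fourier n θ ∂hC = if n = 0 then 1 else 0 := by
  have h := (orthonormal_iff_ite.mp (orthonormal_fourier (T := 1))) 0 n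
  rw [ContinuousMap.inner_toLp] at h
  simp only [← fourier_neg, ← fourier_add] at h
  simp only [eq_comm (a := n)]
  rw [← h]
  simp

lemma log_indep (s : Finset ℕ) (hs : ∀ p ∈ s, p.Prime) (n : ℕ → ℤ) 
    (h : ∑ p ∈ s, (n p : ℝ) * Real.log p = 0) : ∀ p ∈ s, n p = 0 := by
  classical
  set f : (ℕ → ℤ) → (ℕ →₀ ℕ) := fun m => 
    Finsupp.onFinset s (fun p => if p ∈ s then (m p).toNat else 0) (by intro a ha; by_contra h; simp [h] at ha) with hf
  have hprod : ∀ m, (f m).prod (fun p k => p ^ k) = ∏ p ∈ s, p ^ (m p).toNat := by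
    intro m
    rw [Finsupp.prod_of_support_subset (s := s)]
    · apply Finset.prod_congr rfl
      intro p hp
      simp [hf, hp]
    · intro p hp
      by_contra h
      simp [hf, h] at hp
    · simp
  have hsupp : ∀ m, ∀ p ∈ (f m).support, p.Prime := by
    intro m p hp
    apply hs
    by_contra h
    simp [hf, h] at hp
  have hlog : ∀ m : ℕ → ℤ, Real.log ((∏ p ∈ s, p ^ (m p).toNat : ℕ) : ℝ) = ∑ p ∈ s, ((m p).toNat : ℝ) * Real.log p := by
    intro m
    push_cast
    rw [Real.log_prod]
    · simp
    · intro p hp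
      have := (hs p hp).pos
      positivity
  have hpos : ∀ m : ℕ → ℤ, (0:ℝ) < ((∏ p ∈ s, p ^ (m p).toNat : ℕ) : ℝ) := by
    intro m
    exact_mod_cast Finset.prod_pos (fun p hp => pow_pos (hs p hp).pos _)
  have e : Real.log ((∏ p ∈ s, p ^ (n p).toNat : ℕ) : ℝ) = Real.log ((∏ p ∈ s, p ^ (-n p).toNat : ℕ) : ℝ) := by
    rw [hlog n, hlog (fun p => - n p), ← sub_eq_zero, ← Finset.sum_sub_distrib, ← h]
    apply Finset.sum_congr rfl
    intro p _
    rw [← sub_mul]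
    congr 1
    have := Int.toNat_sub_toNat_neg (n p)
    exact_mod_cast this
  have e2 := Real.log_injOn_pos (hpos n) (hpos (fun p => - n p)) e
  have e3 : ∏ p ∈ s, p ^ (n p).toNat = ∏ p ∈ s, p ^ (-n p).toNat := by exact_mod_cast e2
  rw [← hprod n, ← hprod (fun p => - n p)] at e3
  have e4 := congrArg Nat.factorization e3
  rw [Nat.prod_pow_factorization_eq_self (hsupp n), Nat.prod_pow_factorization_eq_self (hsupp _)] at e4
  intro p hp
  have := DFunLike.congr_fun e4 p
  simp [hf, hp] at this
  omega

noncomputable def flow (s : Finset ℕ) (τ : ℝ) : UnitAddTorus s :=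
  fun p => ((-(τ * Real.log (p:ℕ) / (2 * π)) : ℝ) : UnitAddCircle)

lemma continuous_flow (s : Finset ℕ) : Continuous (flow s) := by
  unfold flow
  refine continuous_pi fun p => ?_
  exact (AddCircle.continuous_mk' 1).comp (by fun_prop)

lemma fourier_flow (s : Finset ℕ) (τ : ℝ) (k : ℤ) (p : s) :
    fourier k (flow s τ p) = Complex.exp (((-(k * Real.log (p:ℕ)) : ℝ) * Complex.I) * τ) := by
  unfold flow
  rw [fourier_coe_apply]
  congr 1
  push_cast
  have : (π:ℂ) ≠ 0 := by exact_mod_cast Real.pi_ne_zero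
  field_simp

lemma mFourier_flow (s : Finset ℕ) (τ : ℝ) (n : s → ℤ) :
    UnitAddTorus.mFourier n (flow s τ) =
      Complex.exp (((-(∑ p : s, n p * Real.log (p:ℕ)) : ℝ) * Complex.I) * τ) := by
  unfold UnitAddTorus.mFourier
  simp only [ContinuousMap.coe_mk, fourier_flow]
  rw [← Complex.exp_sum]
  congr 1
  push_cast
  rw [← Finset.sum_neg_distrib, Finset.sum_mul, Finset.sum_mul]

noncomputable def uT (T : ℝ) : Measure ℝ :=
  (ENNReal.ofReal (max T 1))⁻¹ • volume.restrict (Set.Icc (max T 1) (2 * max T 1))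

instance (T : ℝ) : IsProbabilityMeasure (uT T) := by
  constructor
  have : 0 < max T 1 := by positivity
  simp only [uT, Measure.smul_apply, MeasurableSet.univ, Measure.restrict_apply, Set.univ_inter, Real.volume_Icc, smul_eq_mul]
  rw [show 2 * max T 1 - max T 1 = max T 1 by ring]
  apply ENNReal.inv_mul_cancel
  · simp
  · simp

noncomputable def mT (s : Finset ℕ) (T : ℝ) : ProbabilityMeasure (UnitAddTorus s) :=
  ⟨(uT T).map (flow s), Measure.isProbabilityMeasure_map (continuous_flow s).measurable.aemeasurable⟩

lemma weyl_monomial (s : Finset ℕ) (hs : ∀ p ∈ s, p.Prime) (n : s → ℤ) :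
    Tendsto (fun T => ∫ θ, UnitAddTorus.mFourier n θ ∂(mT s T : Measure (UnitAddTorus s))) atTop
      (nhds (∫ θ, UnitAddTorus.mFourier n θ ∂(hT s))) := by
  classical
  by_cases hn : n = 0
  · subst hn
    rw [UnitAddTorus.mFourier_zero]
    simp
  have hz : ∫ θ, UnitAddTorus.mFourier n θ ∂(hT s) = 0 := by
    unfold UnitAddTorus.mFourier
    simp only [ContinuousMap.coe_mk]
    obtain ⟨i, hi⟩ := Function.ne_iff.mp hn
    have := integral_fintype_prod_eq_prod (𝕜 := ℂ) (ι := s) (E := fun _ => UnitAddCircle) (fun i θ => fourier (n i) θ) (μ := fun _ => hC)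
    refine this.trans ?_
    apply Finset.prod_eq_zero (Finset.mem_univ i)
    rw [integral_fourier_haar]
    simpa using hi
  rw [hz]
  set l : ℝ := -(∑ p : s, n p * Real.log (p:ℕ)) with hl
  have hl0 : l ≠ 0 := by
    intro h0
    apply hn
    have := log_indep s hs (fun p => if h : p ∈ s then n ⟨p, h⟩ else 0) (by
      rw [← Finset.sum_coe_sort]
      simp at *
      linarith)
    ext ⟨p, hp⟩
    have := this p hp
    simpa [hp] using this
  have hI : (l * Complex.I : ℂ) ≠ 0 := by simp [hl0]
  refine squeeze_zero_norm' (a := fun T => (2 / |l|) / T) ?_ (tendsto_const_nhds.div_atTop tendsto_id)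
  filter_upwards [eventually_ge_atTop 1] with T hT1
  have hT0 : 0 < T := by linarith
  simp only [mT, ProbabilityMeasure.coe_mk]
  rw [integral_map (continuous_flow s).measurable.aemeasurable (by fun_prop)]
  simp only [mFourier_flow, ← hl, uT, max_eq_left hT1]
  rw [integral_smul_measure, integral_Icc_eq_integral_Ioc, ← intervalIntegral.integral_of_le (by linarith),
    integral_exp_mul_complex hI, norm_smul, norm_div]
  have : ‖Complex.exp (l * Complex.I * (2 * T : ℝ)) - Complex.exp (l * Complex.I * T)‖ ≤ 2 := by
    refine (norm_sub_le _ _).trans ?_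
    rw [show (l * Complex.I * (2 * T : ℝ) : ℂ) = (l * (2 * T) : ℝ) * Complex.I by push_cast; ring,
      show (l * Complex.I * T : ℂ) = (l * T : ℝ) * Complex.I by push_cast; ring, Complex.norm_exp_ofReal_mul_I, Complex.norm_exp_ofReal_mul_I]
    norm_num
  have e : ‖(l * Complex.I : ℂ)‖ = |l| := by simp
  rw [e]
  have e2 : ‖(ENNReal.ofReal T)⁻¹.toReal‖ = 1 / T := by
    rw [ENNReal.toReal_inv, ENNReal.toReal_ofReal hT0.le]
    simp [abs_of_pos hT0]
  rw [e2]
  have : 0 < |l| := abs_pos.2 hl0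
  calc _ ≤ 1 / T * (2 / |l|) := by gcongr
    _ = _ := by ring

noncomputable def hTP (s : Finset ℕ) : ProbabilityMeasure (UnitAddTorus s) := ⟨hT s, inferInstance⟩

lemma weyl (s : Finset ℕ) (hs : ∀ p ∈ s, p.Prime) :
    Tendsto (mT s) atTop (nhds (hTP s)) := by
  rw [ProbabilityMeasure.tendsto_iff_forall_integral_rclike_tendsto ℂ]
  have hint : ∀ (μ : Measure (UnitAddTorus s)) [IsProbabilityMeasure μ] (F : C(UnitAddTorus s, ℂ)), Integrable F μ := by
    intro μ _ F
    exact F.continuous.integrable_of_hasCompactSupport (HasCompactSupport.of_compactSpace _)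
  suffices H : ∀ F : C(UnitAddTorus s, ℂ), Tendsto (fun T => ∫ θ, F θ ∂(mT s T : Measure (UnitAddTorus s))) atTop
      (nhds (∫ θ, F θ ∂(hT s))) from fun f => H f.toContinuousMap
  have Hspan : ∀ F ∈ Submodule.span ℂ (Set.range (UnitAddTorus.mFourier (d := s))), Tendsto (fun T => ∫ θ, F θ ∂(mT s T : Measure (UnitAddTorus s))) atTop
      (nhds (∫ θ, F θ ∂(hT s))) := by
    intro F hF
    induction hF using Submodule.span_induction with
    | mem x h => obtain ⟨n, rfl⟩ := h; exact weyl_monomial s hs n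
    | zero => simp
    | add x y _ _ hx hy =>
      simp only [ContinuousMap.add_apply]
      simp_rw [integral_add (hint _ x) (hint _ y)]
      exact hx.add hy
    | smul a x _ hx =>
      simp only [ContinuousMap.smul_apply, integral_smul]
      exact hx.const_smul a
  intro F
  have hF : F ∈ closure (Submodule.span ℂ (Set.range (UnitAddTorus.mFourier (d := s))) : Set C(UnitAddTorus s, ℂ)) := by
    rw [← Submodule.topologicalClosure_coe, UnitAddTorus.span_mFourier_closure_eq_top]
    trivial
  have hdist : ∀ (μ : Measure (UnitAddTorus s)) [IsProbabilityMeasure μ] (F G : C(UnitAddTorus s, ℂ)), dist (∫ θ, F θ ∂μ) (∫ θ, G θ ∂μ) ≤ dist F G := by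
    intro μ _ F G
    rw [dist_eq_norm, ← integral_sub (hint _ F) (hint _ G)]
    have := norm_integral_le_of_norm_le_const (μ := μ) (f := fun θ => F θ - G θ) (C := dist F G) (Eventually.of_forall fun θ => by
      rw [← dist_eq_norm]; exact ContinuousMap.dist_apply_le_dist θ)
    simpa using this
  rw [Metric.tendsto_nhds]
  intro ε hε
  obtain ⟨G, hG, hFG⟩ := Metric.mem_closure_iff.1 hF (ε/3) (by linarith)
  filter_upwards [Metric.tendsto_nhds.1 (Hspan G hG) (ε/3) (by linarith)] with T hT'
  have h1 := hdist (mT s T : Measure (UnitAddTorus s)) F G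
  have h2 := hdist (hT s) G F
  rw [dist_comm G F] at h2
  have := dist_triangle4 (∫ θ, F θ ∂(mT s T : Measure (UnitAddTorus s))) (∫ θ, G θ ∂(mT s T : Measure (UnitAddTorus s))) (∫ θ, G θ ∂(hT s)) (∫ θ, F θ ∂(hT s))
  linarith

noncomputable def sn (θ : UnitAddCircle) : ℝ := (fourier 1 θ : ℂ).im

lemma continuous_sn : Continuous sn := by unfold sn; fun_prop

noncomputable def gS (s : Finset ℕ) (θ : UnitAddTorus s) : ℝ := ∑ p : s, (1 / √((p:ℕ):ℝ)) * sn (θ p)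

lemma continuous_gS (s : Finset ℕ) : Continuous (gS s) := by
  unfold gS
  refine continuous_finsetSum _ fun p _ => ?_
  exact continuous_const.mul (continuous_sn.comp (continuous_apply p))

lemma zeta_im (t τ : ℝ) : (primeZetaTrunc t τ).im = gS (primesUpTo t) (flow (primesUpTo t) τ) := by
  unfold primeZetaTrunc gS
  rw [Complex.im_sum, ← Finset.sum_coe_sort]
  apply Finset.sum_congr rfl
  rintro ⟨p, hp⟩ _
  have hpp : p.Prime := by simp [primesUpTo] at hp; exact hp.2
  have hp0 : (0:ℝ) < p := by exact_mod_cast hpp.pos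
  have hp0' : (p:ℂ) ≠ 0 := by exact_mod_cast hpp.ne_zero
  unfold sn
  rw [fourier_flow]
  simp only
  rw [show (-(1/2 + Complex.I * τ) : ℂ) = ((-(1/2) : ℝ) : ℂ) + (-(Complex.I * τ)) by push_cast; ring,
    Complex.cpow_add _ _ hp0', show (p:ℂ) = ((p:ℝ):ℂ) by simp, ← Complex.ofReal_cpow hp0.le, Complex.im_ofReal_mul]
  congr 1
  · rw [Real.rpow_neg hp0.le, Real.sqrt_eq_rpow]; simp
  · rw [Complex.cpow_def_of_ne_zero (by simpa using hp0'), ← Complex.ofReal_log hp0.le]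
    congr 2
    push_cast
    ring

lemma hC_eq : hC = (volume : Measure UnitAddCircle) := by
  rw [AddCircle.volume_eq_smul_haarAddCircle]; simp

instance hC_null : NullSingletonClass hC := by
  constructor
  intro a
  rw [hC_eq]
  have h := measure_mono (μ := (volume : Measure UnitAddCircle)) (Set.singleton_subset_iff.2 (Metric.mem_closedBall_self (x := a) le_rfl))
  rw [AddCircle.volume_closedBall] at h
  simpa using h

lemma sn_level (c : ℝ) : hC {θ | sn θ = c} = 0 := by
  apply Set.Finite.measure_zero
  have hfin : ({(⟨√(1 - c^2), c⟩ : ℂ), ⟨-√(1 - c^2), c⟩} : Set ℂ).Finite := Set.toFinite _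
  have hinj : Function.Injective (fun θ : UnitAddCircle => (fourier 1 θ : ℂ)) := by
    intro a b h
    simp only [fourier_one] at h
    exact AddCircle.injective_toCircle one_ne_zero (Circle.ext h)
  refine (hfin.preimage hinj.injOn).subset ?_
  intro θ hθ
  simp only [Set.mem_ofPred_eq, sn] at hθ
  have hn : ‖(fourier 1 θ : ℂ)‖ = 1 := by rw [fourier_one]; exact Circle.norm_coe _
  have hsq : (fourier 1 θ : ℂ).re ^ 2 = 1 - c^2 := by
    have := Complex.sq_norm (fourier 1 θ : ℂ)
    rw [hn, Complex.normSq_apply, hθ] at this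
    linarith
  simp only [Set.mem_preimage, Set.mem_insert_iff, Set.mem_singleton_iff]
  have h0 : 0 ≤ 1 - c^2 := by rw [← hsq]; positivity
  rw [← Real.sq_sqrt h0] at hsq
  rcases sq_eq_sq_iff_eq_or_eq_neg.1 hsq with h | h
  · left; exact Complex.ext h hθ
  · right; exact Complex.ext h hθ

lemma gS_level (s : Finset ℕ) (q : s) (hq : 0 < (q:ℕ)) (c : ℝ) : hT s {θ | gS s θ = c} = 0 := by
  classical
  have hind := ProbabilityTheory.iIndepFun_pi (ι := s) (𝓧 := fun _ => ℝ) (Ω := fun _ => UnitAddCircle) (μ := fun _ => hC)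
    (X := fun p θ => (1 / √((p:ℕ):ℝ)) * sn θ) (fun p => ((continuous_const.mul continuous_sn).measurable).aemeasurable)
  have hmeas : ∀ p : s, Measurable (fun θ : UnitAddTorus s => (1 / √((p:ℕ):ℝ)) * sn (θ p)) := 
    fun p => (continuous_const.mul (continuous_sn.comp (continuous_apply p))).measurable
  have h2 := hind.indepFun_finsetSum_of_notMem hmeas (s := Finset.univ.erase q) (i := q) (by simp)
  set Y : UnitAddTorus s → ℝ := ∑ j ∈ Finset.univ.erase q, fun θ : UnitAddTorus s => (1 / √((j:ℕ):ℝ)) * sn (θ j) with hY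
  set X : UnitAddTorus s → ℝ := fun θ : UnitAddTorus s => (1 / √((q:ℕ):ℝ)) * sn (θ q) with hX
  have hYm : Measurable Y := by
    rw [hY]
    rw [show (∑ j ∈ Finset.univ.erase q, fun θ : UnitAddTorus s => (1 / √((j:ℕ):ℝ)) * sn (θ j)) = fun θ => ∑ j ∈ Finset.univ.erase q, (1 / √((j:ℕ):ℝ)) * sn (θ j) by ext θ; simp]
    exact Finset.measurable_fun_sum _ (fun p _ => hmeas p)
  have hXm : Measurable X := hmeas q
  have hg : ∀ θ, gS s θ = Y θ + X θ := by
    intro θ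
    simp only [hY, hX, gS, Finset.sum_apply]
    rw [Finset.sum_erase_add _ _ (Finset.mem_univ q)]
  have hprod := (ProbabilityTheory.indepFun_iff_map_prod_eq_prod_map_map hYm.aemeasurable hXm.aemeasurable).1 h2
  have hset : MeasurableSet {z : ℝ × ℝ | z.1 + z.2 = c} := measurableSet_eq_fun (by fun_prop) (by fun_prop)
  have e1 : hT s {θ | gS s θ = c} = ((hT s).map (fun θ => (Y θ, X θ))) {z : ℝ × ℝ | z.1 + z.2 = c} := by
    rw [Measure.map_apply (hYm.prodMk hXm) hset]
    simp [hg]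
  have hXp : ∀ d : ℝ, (hT s).map X {d} = 0 := by
    intro d
    rw [Measure.map_apply hXm (measurableSet_singleton d)]
    have hq0 : (0:ℝ) < √((q:ℕ):ℝ) := Real.sqrt_pos.2 (by exact_mod_cast hq)
    have : X ⁻¹' {d} = (Function.eval q) ⁻¹' {θ | sn θ = d * √((q:ℕ):ℝ)} := by
      ext θ
      simp only [hX, Set.mem_preimage, Set.mem_singleton_iff, Set.mem_ofPred_eq, Function.eval]
      field_simp
    rw [this, (measurePreserving_eval (fun _ : s => hC) q).measure_preimage, sn_level]
    exact (measurableSet_eq_fun continuous_sn.measurable measurable_const).nullMeasurableSet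
  rw [e1, hprod, Measure.measure_prod_null hset]
  refine Eventually.of_forall fun y => ?_
  have : (Prod.mk y ⁻¹' {z : ℝ × ℝ | z.1 + z.2 = c}) = {c - y} := by
    ext z; simp; constructor <;> intro h <;> linarith
  simp only [this]
  exact hXp _

lemma mem_primesUpTo {t : ℝ} {p : ℕ} (h : p ∈ primesUpTo t) : p.Prime := by
  simp [primesUpTo] at h; exact h.2

lemma inner_limit (t c : ℝ) (ht : 2 ≤ t) :
    Tendsto (fun T : ℝ => (1 / T) *
            (volume {τ : ℝ | τ ∈ Set.Icc T (2 * T) ∧ (primeZetaTrunc t τ).im ≤ c}).toReal)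
          atTop (nhds ((hT (primesUpTo t)).real {θ | gS (primesUpTo t) θ ≤ c})) := by
  set s := primesUpTo t with hs
  have h2 : 2 ∈ s := by
    simp only [hs, primesUpTo, Finset.mem_filter, Finset.mem_range]
    exact ⟨Nat.lt_succ_of_le (Nat.le_floor (by exact_mod_cast ht)), Nat.prime_two⟩
  have hE : MeasurableSet {θ | gS s θ ≤ c} := measurableSet_le (continuous_gS s).measurable measurable_const
  have hfr : (hTP s : Measure (UnitAddTorus s)) (frontier {θ | gS s θ ≤ c}) = 0 := by
    refine measure_mono_null (frontier_le_subset_eq (continuous_gS s) continuous_const) ?_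
    exact gS_level s ⟨2, h2⟩ (by norm_num) c
  have key := ProbabilityMeasure.tendsto_measure_of_null_frontier_of_tendsto' (weyl s (fun p hp => mem_primesUpTo hp)) hfr
  have key2 := (ENNReal.tendsto_toReal (measure_ne_top _ _)).comp key
  refine key2.congr' ?_
  filter_upwards [eventually_ge_atTop 1] with T hT1
  have hT0 : 0 < T := by linarith
  simp only [Function.comp, mT, ProbabilityMeasure.coe_mk]
  rw [Measure.map_apply (continuous_flow s).measurable hE]
  simp only [uT, max_eq_left hT1, Measure.smul_apply, smul_eq_mul]
  rw [Measure.restrict_apply ((continuous_flow s).measurable hE), ENNReal.toReal_mul, ENNReal.toReal_inv, ENNReal.toReal_ofReal hT0.le, one_div]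
  congr 3
  ext τ
  simp only [zeta_im, Set.mem_inter_iff, Set.mem_preimage, Set.mem_ofPred_eq]
  tauto

lemma abs_sn_le (θ : UnitAddCircle) : |sn θ| ≤ 1 := by
  unfold sn
  refine (Complex.abs_im_le_norm _).trans (le_of_eq ?_)
  rw [fourier_one]; exact Circle.norm_coe _

lemma sn_eq (θ : UnitAddCircle) : (sn θ : ℂ) = (fourier 1 θ - fourier (-1) θ) / (2 * Complex.I) := by
  unfold sn
  rw [Complex.im_eq_sub_conj, fourier_neg]

lemma integrable_circle {E : Type*} [NormedAddCommGroup E] {f : UnitAddCircle → E} (hf : Continuous f) : Integrable f hC :=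
  hf.integrable_of_hasCompactSupport (HasCompactSupport.of_compactSpace _)

lemma integral_sn : ∫ θ, (sn θ : ℂ) ∂hC = 0 := by
  simp_rw [sn_eq]
  rw [integral_div, integral_sub (integrable_circle (by fun_prop)) (integrable_circle (by fun_prop)),
    integral_fourier_haar, integral_fourier_haar]
  simp

lemma integral_sn_sq : ∫ θ, (sn θ : ℂ)^2 ∂hC = 1/2 := by
  have : ∀ θ : UnitAddCircle, (sn θ : ℂ)^2 = 1/2 * fourier 0 θ - (1/4 * fourier 2 θ + 1/4 * fourier (-2) θ) := by
    intro θ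
    rw [sn_eq, div_pow, mul_pow, Complex.I_sq, show (2:ℤ) = 1 + 1 by norm_num, show (-(1+1):ℤ) = -1 + -1 by norm_num,
      show (0:ℤ) = 1 + -1 by norm_num]
    simp only [fourier_add]
    ring
  simp_rw [this]
  rw [integral_sub (integrable_circle (by fun_prop)) (integrable_circle (by fun_prop)),
    integral_add (integrable_circle (by fun_prop)) (integrable_circle (by fun_prop))]
  simp only [integral_const_mul, integral_fourier_haar]
  simp

noncomputable def bJ (y : ℝ) : ℂ := ∫ θ, Complex.exp ((y * sn θ : ℝ) * Complex.I) ∂hC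

lemma norm_bJ_le (y : ℝ) : ‖bJ y‖ ≤ 1 := by
  have := norm_integral_le_of_norm_le_const (μ := hC) (f := fun θ => Complex.exp ((y * sn θ : ℝ) * Complex.I)) (C := 1)
    (Eventually.of_forall fun θ => by rw [Complex.norm_exp_ofReal_mul_I])
  simpa [bJ] using this

lemma bJ_bound (y : ℝ) (hy : |y| ≤ 1) : ‖bJ y - Complex.exp ((-(y^2/4) : ℝ))‖ ≤ |y|^3 := by
  have h1 : ‖bJ y - (1 - y^2/4 : ℝ)‖ ≤ |y|^3 * (2/9) := by
    have e : ((1 - y^2/4 : ℝ) : ℂ) = ∫ θ, (1 + (y * Complex.I) * (sn θ : ℂ) - (y^2/2) * (sn θ : ℂ)^2) ∂hC := by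
      have c1 : Continuous (fun θ => (sn θ : ℂ)) := Complex.continuous_ofReal.comp continuous_sn
      rw [integral_sub (integrable_circle (by fun_prop)) (integrable_circle (by fun_prop)),
        integral_add (integrable_circle (by fun_prop)) (integrable_circle (by fun_prop))]
      simp only [integral_const_mul, integral_sn, integral_sn_sq]
      simp
      ring
    have c1 : Continuous (fun θ => (sn θ : ℂ)) := Complex.continuous_ofReal.comp continuous_sn
    have c2 : Continuous (fun θ => Complex.exp ((y * sn θ : ℝ) * Complex.I)) := by
      push_cast; fun_prop
    rw [e, bJ, ← integral_sub (integrable_circle c2) (integrable_circle (by fun_prop))]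
    have := norm_integral_le_of_norm_le_const (μ := hC) (f := fun θ => Complex.exp ((y * sn θ : ℝ) * Complex.I) - (1 + (y * Complex.I) * (sn θ : ℂ) - (y^2/2) * (sn θ : ℂ)^2)) (C := |y|^3 * (2/9))
      (Eventually.of_forall fun θ => by
        have hs := abs_sn_le θ
        have hn : ‖((y * sn θ : ℝ) * Complex.I : ℂ)‖ ≤ |y| := by
          rw [norm_mul, Complex.norm_I, mul_one, Complex.norm_real, Real.norm_eq_abs, abs_mul]
          nlinarith [abs_nonneg y]
        have hb := Complex.exp_bound (hn.trans hy) (n := 3) (by norm_num)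
        have e2 : ∑ m ∈ Finset.range 3, ((y * sn θ : ℝ) * Complex.I : ℂ)^m / (m.factorial : ℂ) = 1 + (y * Complex.I) * (sn θ : ℂ) - (y^2/2) * (sn θ : ℂ)^2 := by
          simp [Finset.sum_range_succ, mul_pow, Nat.factorial]
          ring
        rw [e2] at hb
        refine hb.trans ?_
        have e3 : ((Nat.succ 3 : ℕ) : ℝ) * ((Nat.factorial 3 : ℕ) * (3:ℕ) : ℝ)⁻¹ = 2/9 := by norm_num [Nat.factorial]
        rw [e3]
        gcongr)
    simpa using this
  have h2 : ‖((1 - y^2/4 : ℝ) : ℂ) - Complex.exp ((-(y^2/4) : ℝ))‖ ≤ |y|^3 * (1/16) := by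
    rw [← Complex.ofReal_exp, ← Complex.ofReal_sub, Complex.norm_real, Real.norm_eq_abs, abs_sub_comm]
    have hy2 : y^2 ≤ 1 := by rw [← sq_abs]; nlinarith [abs_nonneg y]
    have := Real.abs_exp_sub_one_sub_id_le (x := -(y^2/4)) (by rw [abs_neg, abs_of_nonneg (by positivity)]; linarith)
    have e : Real.exp (-(y^2/4)) - (1 - y^2/4) = Real.exp (-(y^2/4)) - 1 - -(y^2/4) := by ring
    rw [e]
    refine this.trans ?_
    have : (-(y^2/4))^2 = |y|^3 * |y| * (1/16) := by
      have : |y|^3*|y| = (|y|^2)^2 := by ring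
      rw [this, sq_abs]; ring
    rw [this]
    have : 0 ≤ |y|^3 := by positivity
    nlinarith
  have : 0 ≤ |y|^3 := by positivity
  calc _ ≤ _ := norm_sub_le_norm_sub_add_norm_sub _ ((1 - y^2/4 : ℝ) : ℂ) _
    _ ≤ _ := by linarith

lemma prod_diff {ι : Type*} (s : Finset ι) (a b : ι → ℂ) (ha : ∀ i ∈ s, ‖a i‖ ≤ 1) (hb : ∀ i ∈ s, ‖b i‖ ≤ 1) :
    ‖∏ i ∈ s, a i - ∏ i ∈ s, b i‖ ≤ ∑ i ∈ s, ‖a i - b i‖ := by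
  classical
  induction s using Finset.induction_on with
  | empty => simp
  | insert i s hi ih =>
    rw [Finset.prod_insert hi, Finset.prod_insert hi, Finset.sum_insert hi]
    have e : a i * ∏ i ∈ s, a i - b i * ∏ i ∈ s, b i = (a i - b i) * ∏ i ∈ s, a i + b i * (∏ i ∈ s, a i - ∏ i ∈ s, b i) := by ring
    rw [e]
    refine (norm_add_le _ _).trans ?_
    rw [norm_mul, norm_mul]
    have h1 : ‖∏ i ∈ s, a i‖ ≤ 1 := by
      rw [norm_prod]
      exact Finset.prod_le_one (fun _ _ => norm_nonneg _) (fun j hj => ha j (Finset.mem_insert_of_mem hj))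
    have h2 := hb i (Finset.mem_insert_self _ _)
    have h3 := ih (fun j hj => ha j (Finset.mem_insert_of_mem hj)) (fun j hj => hb j (Finset.mem_insert_of_mem hj))
    have := norm_nonneg (a i - b i)
    have := norm_nonneg (∏ i ∈ s, a i - ∏ i ∈ s, b i)
    nlinarith

noncomputable def sg (t : ℝ) : ℝ := √((1/2) * Real.log (Real.log t))

noncomputable def law (t : ℝ) : ProbabilityMeasure ℝ :=
  ⟨(hT (primesUpTo t)).map (fun θ => gS (primesUpTo t) θ / sg t),
    Measure.isProbabilityMeasure_map ((continuous_gS _).div_const _).measurable.aemeasurable⟩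

lemma charFun_law (t ξ : ℝ) : charFun (law t : Measure ℝ) ξ = ∏ p ∈ primesUpTo t, bJ (ξ / sg t / √(p:ℝ)) := by
  rw [charFun_apply_real]
  simp only [law, ProbabilityMeasure.coe_mk]
  rw [integral_map ((continuous_gS _).div_const _).measurable.aemeasurable (by fun_prop)]
  rw [← Finset.prod_coe_sort]
  unfold bJ
  have := integral_fintype_prod_eq_prod (𝕜 := ℂ) (ι := primesUpTo t) (E := fun _ => UnitAddCircle)
    (fun p θ => Complex.exp ((ξ / sg t / √((p:ℕ):ℝ) * sn θ : ℝ) * Complex.I)) (μ := fun _ => hC)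
  refine Eq.trans ?_ this
  congr 1
  ext θ
  rw [← Complex.exp_sum]
  congr 1
  rw [← Finset.sum_mul]
  congr 1
  unfold gS
  push_cast
  rw [Finset.sum_div, Finset.mul_sum]
  apply Finset.sum_congr rfl
  intro p _
  ring

lemma tendsto_charFun_law (ξ : ℝ) : Tendsto (fun t => charFun (law t : Measure ℝ) ξ) atTop
    (nhds (charFun (ProbabilityTheory.gaussianReal 0 1) ξ)) := by
  have hsg : Tendsto sg atTop atTop := by
    unfold sg
    exact Real.tendsto_sqrt_atTop.comp (tendsto_loglog.const_mul_atTop (by norm_num))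
  have hq : Tendsto (fun t => |ξ / sg t|) atTop (nhds 0) := by
    have := (hsg.const_div_atTop ξ).abs
    simpa using this
  -- main term
  have hmain : Tendsto (fun t => ∏ p ∈ primesUpTo t, Complex.exp ((-((ξ / sg t / √(p:ℝ))^2/4) : ℝ))) atTop
      (nhds (charFun (ProbabilityTheory.gaussianReal 0 1) ξ)) := by
    rw [ProbabilityTheory.charFun_gaussianReal]
    have h := (mertens_tendsto.const_mul (-(ξ^2/2)))
    have h2 := (Complex.continuous_exp.comp Complex.continuous_ofReal).continuousAt.tendsto.comp h
    have e : (Complex.exp ∘ Complex.ofReal) (-(ξ^2/2) * 1) = Complex.exp (ξ * (0:ℝ) * Complex.I - ((1:NNReal):ℝ) * ξ^2/2) := by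
      simp
    rw [e] at h2
    refine h2.congr' ?_
    filter_upwards [tendsto_loglog.eventually_gt_atTop 0] with t ht
    rw [← Complex.exp_sum]
    simp only [Function.comp]
    congr 1
    rw [← Complex.ofReal_sum]
    congr 1
    rw [Finset.sum_div, Finset.mul_sum]
    apply Finset.sum_congr rfl
    intro p hp
    have hp0 : (0:ℝ) < p := by exact_mod_cast (mem_primesUpTo hp).pos
    rw [div_pow, div_pow, Real.sq_sqrt hp0.le, sg, Real.sq_sqrt (by positivity)]
    field_simp
    ring
  have hsumm := (Real.summable_nat_rpow_inv (p := 3/2)).2 (by norm_num)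
  set C := ∑' n : ℕ, ((n:ℝ)^(3/2:ℝ))⁻¹ with hC'
  have hdiff : Tendsto (fun t => charFun (law t : Measure ℝ) ξ - ∏ p ∈ primesUpTo t, Complex.exp ((-((ξ / sg t / √(p:ℝ))^2/4) : ℝ))) atTop (nhds 0) := by
    have h0 : Tendsto (fun t => |ξ / sg t|^3 * C) atTop (nhds 0) := by
      have := (hq.pow 3).mul_const C
      simpa using this
    refine squeeze_zero_norm' ?_ h0
    filter_upwards [hq.eventually_le_const (show (0:ℝ) < 1 by norm_num)] with t ht
    rw [charFun_law]
    refine (prod_diff _ _ _ (fun p _ => norm_bJ_le _) ?_).trans ?_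
    · intro p _
      rw [Complex.norm_exp_ofReal]
      apply Real.exp_le_one_iff.2
      have : 0 ≤ (ξ / sg t / √(p:ℝ))^2 := by positivity
      linarith
    · have hterm : ∀ p ∈ primesUpTo t, ‖bJ (ξ / sg t / √(p:ℝ)) - Complex.exp ((-((ξ / sg t / √(p:ℝ))^2/4) : ℝ))‖ ≤ |ξ / sg t|^3 * ((p:ℝ)^(3/2:ℝ))⁻¹ := by
        intro p hp
        have hp1 : (1:ℝ) ≤ p := by exact_mod_cast (mem_primesUpTo hp).one_le
        have hs1 : 1 ≤ √(p:ℝ) := Real.one_le_sqrt.2 hp1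
        refine (bJ_bound _ ?_).trans (le_of_eq ?_)
        · rw [abs_div, abs_of_pos (by linarith : 0 < √(p:ℝ))]
          exact (div_le_self (abs_nonneg _) hs1).trans ht
        · rw [abs_div, abs_of_pos (by linarith : 0 < √(p:ℝ)), div_pow, Real.sqrt_eq_rpow, ← Real.rpow_natCast ((p:ℝ)^(1/2:ℝ)), ← Real.rpow_mul (by linarith)]
          norm_num
          rfl
      refine (Finset.sum_le_sum hterm).trans ?_
      rw [← Finset.mul_sum]
      gcongr
      exact hsumm.sum_le_tsum _ (fun n _ => by positivity)
  have := hdiff.add hmain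
  simpa using this

lemma stdNormalCDF_eq (x : ℝ) : stdNormalCDF x = (ProbabilityTheory.gaussianReal 0 1 (Set.Iic x)).toReal := by
  rw [ProbabilityTheory.gaussianReal_apply_eq_integral _ (by simp), ENNReal.toReal_ofReal]
  · unfold stdNormalCDF
    rw [← integral_const_mul]
    congr 1
    ext u
    simp [ProbabilityTheory.gaussianPDFReal]
  · exact integral_nonneg (fun u => ProbabilityTheory.gaussianPDFReal_nonneg _ _ _)

lemma outer_limit (x : ℝ) : Tendsto (fun t => ((law t : Measure ℝ) (Set.Iic x)).toReal) atTop (nhds (stdNormalCDF x)) := by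
  have hlaw : Tendsto law atTop (nhds ⟨ProbabilityTheory.gaussianReal 0 1, inferInstance⟩) := by
    refine tendsto_of_seq_tendsto fun u hu => ?_
    refine ProbabilityMeasure.tendsto_of_tendsto_charFun fun ξ => ?_
    exact (tendsto_charFun_law ξ).comp hu
  have h := ProbabilityMeasure.tendsto_measure_of_null_frontier_of_tendsto' hlaw (E := Set.Iic x) (by
    have : NullSingletonClass (ProbabilityTheory.gaussianReal 0 1) := ProbabilityTheory.nullSingletonClass_gaussianReal (by simp)
    rw [frontier_Iic]
    exact measure_singleton (μ := ProbabilityTheory.gaussianReal 0 1) _)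
  rw [stdNormalCDF_eq]
  exact (ENNReal.tendsto_toReal (measure_ne_top _ _)).comp h

theorem stmt8 (x : ℝ) :
    ∃ L : ℝ → ℝ,
      (∀ᶠ t in (atTop : Filter ℝ),
        Tendsto
          (fun T : ℝ => (1 / T) *
            (volume {τ : ℝ | τ ∈ Set.Icc T (2 * T) ∧
              (primeZetaTrunc t τ).im ≤ x * Real.sqrt ((1 / 2) * Real.log (Real.log t))}).toReal)
          atTop (nhds (L t))) ∧
      Tendsto L atTop (nhds (stdNormalCDF x)) := by
  refine ⟨fun t => (hT (primesUpTo t)).real {θ | gS (primesUpTo t) θ ≤ x * √((1 / 2) * Real.log (Real.log t))}, ?_, ?_⟩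
  · filter_upwards [eventually_ge_atTop 2] with t ht
    exact inner_limit t _ ht
  · refine (outer_limit x).congr' ?_
    filter_upwards [tendsto_loglog.eventually_gt_atTop 0] with t ht
    have hs : 0 < √((1 / 2) * Real.log (Real.log t)) := Real.sqrt_pos.2 (by positivity)
    simp only [law, ProbabilityMeasure.coe_mk]
    rw [Measure.map_apply ((continuous_gS _).div_const _).measurable measurableSet_Iic]
    unfold Measure.real
    congr 2
    ext θ
    simp only [Set.mem_preimage, Set.mem_Iic, Set.mem_ofPred_eq, sg]
    rw [div_le_iff₀ hs]
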